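/- In the heat kernel setup, fix an integer b ≥ 2, real numbers α, β, a positive real γ, an integer a ≥ γ, and an integer a' ≥ 1. Define the low-frequency part Δ_{−1}(f,g) := P_1^{(b)}( P_1^{(b)} f · P_1^{(b)} g ). Then there is a constant C such that for all f, g ∈ L^∞(μ): ‖e^{−L}Δ_{−1}(f,g)‖_∞ + sup_{0<s≤1} s^{−γ/2} ‖Q_s^{(a)} Δ_{−1}(f,g)‖_∞ ≤ C·‖f‖_{C^α,(a')}·‖g‖_{C^β,(a')}, i.e. ‖Δ_{−1}(f,g)‖_{C^γ} ≲ ‖f‖_{C^α}‖g‖_{C^β}. (Proposition 3.1.) -/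

import Mathlib

open MeasureTheory Metric Set
open scoped ENNReal NNReal

noncomputable section

/-- The (pointwise) supremum norm of a real-valued function, valued in `ℝ≥0∞`. -/
def supNorm {M : Type*} (g : M → ℝ) : ℝ≥0∞ := ⨆ x, (‖g x‖₊ : ℝ≥0∞)

/-- `γ_a = ∫_0^∞ s^a e^{-s} ds/s`. -/
def gammaInt (a : ℕ) : ℝ := ∫ s in Set.Ioi (0 : ℝ), s ^ a * Real.exp (-s) / s

/-- A conservative heat kernel on a doubling metric measure space, satisfying the
Gaussian upper estimates (UE) for all time derivatives, for `0 < t ≤ 1`. -/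
structure HeatKernelSetup (M : Type*) [MeasurableSpace M] [MetricSpace M] where
  μ : Measure M
  p : ℝ → M → M → ℝ
  C_D : ℝ
  C_D_pos : 0 < C_D
  doubling : ∀ (x : M) (r : ℝ), 0 < r →
    μ (Metric.ball x (2 * r)) ≤ ENNReal.ofReal C_D * μ (Metric.ball x r)
  p_nonneg : ∀ t : ℝ, 0 < t → ∀ x y, 0 ≤ p t x y
  p_symm : ∀ t : ℝ, 0 < t → ∀ x y, p t x y = p t y x
  p_meas : ∀ t : ℝ, 0 < t → Measurable (Function.uncurry (p t))
  semigroup : ∀ s t : ℝ, 0 < s → 0 < t → ∀ x z,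
    p (s + t) x z = ∫ y, p s x y * p t y z ∂μ
  conservative : ∀ t : ℝ, 0 < t → ∀ x, ∫ y, p t x y ∂μ = 1
  smooth : ∀ (x y : M) (m : ℕ) (t : ℝ), 0 < t →
    DifferentiableAt ℝ (iteratedDeriv m (fun s => p s x y)) t
  diff_under_int : ∀ (f : M → ℝ), Measurable f → supNorm f < ⊤ →
    ∀ (m : ℕ) (x : M) (t : ℝ), 0 < t →
      iteratedDeriv m (fun s => ∫ y, p s x y * f y ∂μ) t
        = ∫ y, iteratedDeriv m (fun s => p s x y) t * f y ∂μ
  UE : ∀ m : ℕ, ∃ C, 0 < C ∧ ∃ c, 0 < c ∧ ∀ t : ℝ, 0 < t → t ≤ 1 → ∀ x y,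
    |t ^ m * iteratedDeriv m (fun s => p s x y) t|
      ≤ C / Real.sqrt ((μ (Metric.ball x (Real.sqrt t))).toReal
            * (μ (Metric.ball y (Real.sqrt t))).toReal)
          * Real.exp (-c * dist x y ^ 2 / t)

namespace HeatKernelSetup

variable {M : Type*} [MeasurableSpace M] [MetricSpace M] (H : HeatKernelSetup M)

/-- The semigroup `e^{-tL}` applied to `f`. -/
def S (t : ℝ) (f : M → ℝ) (x : M) : ℝ := ∫ y, H.p t x y * f y ∂H.μ

/-- `Q_t^{(a)} f = (-1)^a t^a ∂_t^a (e^{-tL} f)`. -/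
def Q (a : ℕ) (t : ℝ) (f : M → ℝ) (x : M) : ℝ :=
  (-1 : ℝ) ^ a * t ^ a * iteratedDeriv a (fun s => H.S s f x) t

/-- `P_t^{(a)} f = ∑_{k<a} c_{a,k} (-1)^k t^k ∂_t^k (e^{-tL} f)`, where the coefficients
`c_{a,k} = 1/k!` are determined by `φ_a(x) = (∑_k c_{a,k} x^k) e^{-x}`. -/
def P (a : ℕ) (t : ℝ) (f : M → ℝ) (x : M) : ℝ :=
  ∑ k ∈ Finset.range a, ((Nat.factorial k : ℝ))⁻¹ * (-1 : ℝ) ^ k * t ^ k *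
    iteratedDeriv k (fun s => H.S s f x) t

/-- `(tL)P_t^{(a)} f = ∑_{k<a} c_{a,k} (-1)^{k+1} t^{k+1} ∂_t^{k+1} (e^{-tL} f)`. -/
def LP (a : ℕ) (t : ℝ) (f : M → ℝ) (x : M) : ℝ :=
  ∑ k ∈ Finset.range a, ((Nat.factorial k : ℝ))⁻¹ * (-1 : ℝ) ^ (k + 1) * t ^ (k + 1) *
    iteratedDeriv (k + 1) (fun s => H.S s f x) t

/-- The Hölder norm `‖f‖_{C^σ,(a)} = ‖e^{-L} f‖_∞ + sup_{0<t≤1} t^{-σ/2} ‖Q_t^{(a)} f‖_∞`. -/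
def CNorm (a : ℕ) (σ : ℝ) (f : M → ℝ) : ℝ≥0∞ :=
  supNorm (H.S 1 f) +
    ⨆ t ∈ Set.Ioc (0 : ℝ) 1, ENNReal.ofReal (t ^ (-σ / 2)) * supNorm (H.Q a t f)

/-- The integrand of the paraproduct `Π_g^{(b)}(f)` at frequency scale `t`:
`(tL)P_t^{(b)}( Q_t^{(b-1)} f · P_t^{(b)} g ) + Q_t^{(b-1)}( (tL)P_t^{(b)} f · P_t^{(b)} g )`. -/
def paraInner (b : ℕ) (g f : M → ℝ) (t : ℝ) : M → ℝ := fun y =>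
  H.LP b t (fun z => H.Q (b - 1) t f z * H.P b t g z) y
    + H.Q (b - 1) t (fun z => H.LP b t f z * H.P b t g z) y

/-- `Q_s^{(a)} Π_g^{(b)}(f)`, defined by applying `Q_s^{(a)}` under the time integral. -/
def paraQ (b a : ℕ) (g f : M → ℝ) (s : ℝ) : M → ℝ := fun x =>
  (gammaInt b)⁻¹ * ∫ t in Set.Ioc (0 : ℝ) 1, H.Q a s (H.paraInner b g f t) x / t

/-- `e^{-L} Π_g^{(b)}(f)`, defined by applying `e^{-L}` under the time integral. -/
def paraS (b : ℕ) (g f : M → ℝ) : M → ℝ := fun x =>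
  (gammaInt b)⁻¹ * ∫ t in Set.Ioc (0 : ℝ) 1, H.S 1 (H.paraInner b g f t) x / t

/-- The paraproduct `Π_g^{(b)}(f)` as a function, when the integral converges. -/
def paraFn (b : ℕ) (g f : M → ℝ) : M → ℝ := fun x =>
  (gammaInt b)⁻¹ * ∫ t in Set.Ioc (0 : ℝ) 1, H.paraInner b g f t x / t

/-- The resolution operator `R(v)_t = ∫_0^t P_{t-s}^{(b)} v(s) ds`. -/
def resolve (b : ℕ) (v : ℝ → M → ℝ) (t : ℝ) : M → ℝ := fun x =>
  ∫ s in Set.Ioc (0 : ℝ) t, H.P b (t - s) (v s) x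

end HeatKernelSetup

/-!
For bounded measurable `f` the Gaussian bounds give `‖∂_t^m e^{-tL} f‖_∞ ≤ K ‖f‖_∞` for `t` bounded
away from `0`, hence `∂_t^{j+m} e^{-(s+t)L} = (∂_s^j e^{-sL}) (∂_t^m e^{-tL})`. Two consequences:

* every `∂_t^k e^{-tL} f` at `t = 1`, and so `P_1^{(b)} f`, is bounded by any norm
  `‖f‖_{C^σ,(a)}`. For `k ≥ a` split the time as `1/2 + 1/2`. For `k < a` integrate backwards
  from `t = 2`, where every derivative is controlled by `e^{-L} f`, using that
  `‖∂_t^{k+1} e^{-tL} f‖_∞` decreases in `t`;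
* `∂_s^a e^{-sL} P_1^{(b)} h` is a combination of derivatives of `e^{-(s+1)L} h`, so it is bounded
  by `‖h‖_∞` uniformly in `s > 0`, and `Q_s^{(a)}` contributes the whole factor `s^a ≤ s^{γ/2}`.
-/

/-! ### Bounded measurable functions -/

/-- The space `L^∞` of bounded measurable functions. They are genuine functions rather than classes
modulo null sets, and the norm is the pointwise supremum. -/
structure BddMeasurable {M : Type*} [MeasurableSpace M] (f : M → ℝ) : Prop where
  measurable : Measurable f
  supNorm_lt_top : supNorm f < ⊤

section supNorm

variable {M : Type*}

lemma supNorm_le_iff {f : M → ℝ} {A : ℝ≥0∞} : supNorm f ≤ A ↔ ∀ x, ‖f x‖ₑ ≤ A :=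
  iSup_le_iff

lemma enorm_le_supNorm (f : M → ℝ) (x : M) : ‖f x‖ₑ ≤ supNorm f :=
  supNorm_le_iff.1 le_rfl x

lemma supNorm_const_mul (c : ℝ) (f : M → ℝ) : supNorm (fun x ↦ c * f x) = ‖c‖ₑ * supNorm f := by
  simp only [supNorm, nnnorm_mul, ENNReal.coe_mul, ENNReal.mul_iSup]
  rfl

lemma supNorm_mul_le (f g : M → ℝ) : supNorm (fun x ↦ f x * g x) ≤ supNorm f * supNorm g :=
  supNorm_le_iff.2 fun x ↦ (enorm_mul _ _).trans_le <|
    mul_le_mul' (enorm_le_supNorm f x) (enorm_le_supNorm g x)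

lemma supNorm_sum_const_mul_le {ι : Type*} (s : Finset ι) (c : ι → ℝ) {u : ι → M → ℝ}
    {K : ι → ℝ≥0} {N : ℝ≥0∞} (hu : ∀ i ∈ s, supNorm (u i) ≤ K i * N) :
    supNorm (fun x ↦ ∑ i ∈ s, c i * u i x) ≤ (∑ i ∈ s, ‖c i‖₊ * K i : ℝ≥0) * N := by
  refine supNorm_le_iff.2 fun x ↦ (enorm_sum_le _ _).trans ?_
  push_cast
  rw [Finset.sum_mul]
  refine Finset.sum_le_sum fun i hi ↦ ?_
  rw [enorm_mul, mul_assoc]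
  exact mul_le_mul_right ((enorm_le_supNorm _ x).trans (hu i hi)) _

end supNorm

namespace BddMeasurable

variable {M : Type*} [MeasurableSpace M] {μ : Measure M} {f g : M → ℝ}

lemma norm_le (hf : BddMeasurable f) (x : M) : ‖f x‖ ≤ (supNorm f).toReal := by
  rw [← toReal_enorm]
  exact ENNReal.toReal_mono hf.supNorm_lt_top.ne (enorm_le_supNorm f x)

lemma of_supNorm_le {K : ℝ≥0} (hm : Measurable g) (hf : BddMeasurable f)
    (h : supNorm g ≤ K * supNorm f) : BddMeasurable g :=
  ⟨hm, h.trans_lt (ENNReal.mul_lt_top ENNReal.coe_lt_top hf.supNorm_lt_top)⟩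

lemma mul (hf : BddMeasurable f) (hg : BddMeasurable g) : BddMeasurable (fun x ↦ f x * g x) :=
  ⟨hf.measurable.mul hg.measurable,
    (supNorm_mul_le f g).trans_lt (ENNReal.mul_lt_top hf.supNorm_lt_top hg.supNorm_lt_top)⟩

lemma sum_const_mul {ι : Type*} (s : Finset ι) (c : ι → ℝ) {u : ι → M → ℝ}
    (hu : ∀ i ∈ s, BddMeasurable (u i)) : BddMeasurable (fun x ↦ ∑ i ∈ s, c i * u i x) := by
  refine ⟨Finset.measurable_fun_sum s fun i hi ↦ (hu i hi).measurable.const_mul (c i), ?_⟩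
  refine (supNorm_sum_const_mul_le (K := fun i ↦ (supNorm (u i)).toNNReal) (N := 1) s c
    fun i hi ↦ ?_).trans_lt (ENNReal.mul_lt_top ENNReal.coe_lt_top ENNReal.one_lt_top)
  rw [mul_one, ENNReal.coe_toNNReal (hu i hi).supNorm_lt_top.ne]

lemma integrable_mul (hf : BddMeasurable f) {k : M → ℝ} (hk : Integrable k μ) :
    Integrable (fun y ↦ k y * f y) μ :=
  hk.mul_bdd hf.measurable.aestronglyMeasurable (.of_forall hf.norm_le)

lemma enorm_integral_mul_le (hf : BddMeasurable f) (k : M → ℝ) :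
    ‖∫ y, k y * f y ∂μ‖ₑ ≤ (∫⁻ y, ‖k y‖ₑ ∂μ) * supNorm f := by
  refine (enorm_integral_le_lintegral_enorm _).trans ?_
  rw [← lintegral_mul_const' _ _ hf.supNorm_lt_top.ne]
  refine lintegral_mono fun y ↦ ?_
  rw [enorm_mul]
  exact mul_le_mul_right (enorm_le_supNorm f y) _

end BddMeasurable

/-! ### Derivatives of measurable families, Gaussian series -/

lemma measurable_of_hasDerivAt {Ω : Type*} [MeasurableSpace Ω] {u : ℝ → Ω → ℝ} {u' : Ω → ℝ} {t : ℝ}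
    (hu : ∀ s, t ≤ s → Measurable (u s)) (hderiv : ∀ ω, HasDerivAt (fun s ↦ u s ω) (u' ω) t) :
    Measurable u' := by
  let h : ℕ → ℝ := fun n ↦ 1 / ((n : ℝ) + 1)
  have hpos (n : ℕ) : 0 < h n := Nat.one_div_pos_of_nat
  have hlim : Filter.Tendsto h Filter.atTop (nhdsWithin 0 (Ioi 0)) :=
    tendsto_nhdsWithin_iff.2 ⟨tendsto_one_div_add_atTop_nhds_zero_nat, .of_forall hpos⟩
  refine measurable_of_tendsto_metrizable (f := fun n ω ↦ (h n)⁻¹ • (u (t + h n) ω - u t ω)) ?_ ?_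
  · intro n
    have hle : t ≤ t + h n := le_add_of_nonneg_right (hpos n).le
    exact ((hu _ hle).sub (hu t le_rfl)).const_mul _
  · exact tendsto_pi_nhds.2 fun ω ↦ (hderiv ω).tendsto_slope_zero_right.comp hlim

lemma summable_pow_mul_exp_neg_mul_sq {D c : ℝ} (hD : 0 < D) (hc : 0 < c) :
    Summable fun n : ℕ ↦ D ^ n * Real.exp (-c * n ^ 2) := by
  have h := (summable_pow_mul_jacobiTheta₂_term_bound (Real.log D / (2 * Real.pi))
    (div_pos hc Real.pi_pos) 0).comp_injective Nat.cast_injective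
  refine h.congr fun n ↦ ?_
  rw [← Real.exp_log (pow_pos hD n), ← Real.exp_add, Real.log_pow]
  simp only [Function.comp_apply, pow_zero, one_mul, Int.cast_natCast, Int.cast_abs, Nat.abs_cast]
  congr 1
  field_simp
  ring

namespace HeatKernelSetup

variable {M : Type*} [MeasurableSpace M] [MetricSpace M] (H : HeatKernelSetup M)

/-! ### Volumes of balls -/

/-- The volume `V(x, r) = μ(B(x, r))` as a real number; it is finite, see `measure_ball_ne_top`. -/
def V (x : M) (r : ℝ) : ℝ := H.μ.real (ball x r)

lemma V_pos_of_le_one (x : M) {r : ℝ} (hr : 0 < r) (hr1 : r ≤ 1) : 0 < H.V x r := by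
  refine measureReal_nonneg.lt_of_ne' fun hV ↦ ?_
  obtain ⟨C, -, c, -, hUE⟩ := H.UE 0
  have hp (y : M) : H.p (r ^ 2) x y = 0 := by
    have hy := hUE (r ^ 2) (by positivity) (pow_le_one₀ hr.le hr1) x y
    rw [Real.sqrt_sq hr.le, ← measureReal_def, hV] at hy
    simpa using hy
  have hone := H.conservative (r ^ 2) (by positivity) x
  simp only [hp, integral_zero] at hone
  exact zero_ne_one hone

lemma measure_ball_two_pow_mul_le (x : M) {r : ℝ} (hr : 0 < r) (n : ℕ) :
    H.μ (ball x (2 ^ n * r)) ≤ ENNReal.ofReal H.C_D ^ n * H.μ (ball x r) := by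
  induction n with
  | zero => simp
  | succ n ih =>
    calc H.μ (ball x (2 ^ (n + 1) * r))
        = H.μ (ball x (2 * (2 ^ n * r))) := by rw [pow_succ', mul_assoc]
      _ ≤ ENNReal.ofReal H.C_D * H.μ (ball x (2 ^ n * r)) := H.doubling x _ (by positivity)
      _ ≤ ENNReal.ofReal H.C_D * (ENNReal.ofReal H.C_D ^ n * H.μ (ball x r)) := by gcongr
      _ = ENNReal.ofReal H.C_D ^ (n + 1) * H.μ (ball x r) := by rw [pow_succ', mul_assoc]

lemma measure_ball_ne_top (x : M) (r : ℝ) : H.μ (ball x r) ≠ ⊤ := by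
  obtain ⟨n, hn⟩ := pow_unbounded_of_one_lt r one_lt_two
  have hone : H.μ (ball x 1) ≠ ⊤ := fun h ↦ by
    have hV := H.V_pos_of_le_one x one_pos le_rfl
    simp [V, measureReal_def, h] at hV
  have hle := H.measure_ball_two_pow_mul_le x one_pos n
  refine ne_top_of_le_ne_top ?_ ((measure_mono (ball_subset_ball ?_)).trans hle)
  · exact ENNReal.mul_ne_top (ENNReal.pow_ne_top ENNReal.ofReal_ne_top) hone
  · rw [mul_one]
    exact hn.le

lemma V_mono {x y : M} {r s : ℝ} (h : r + dist x y ≤ s) : H.V x r ≤ H.V y s :=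
  measureReal_mono (ball_subset_ball' h) (H.measure_ball_ne_top y s)

lemma V_pos (x : M) {r : ℝ} (hr : 0 < r) : 0 < H.V x r :=
  (H.V_pos_of_le_one x (lt_min hr one_pos) (min_le_right r 1)).trans_le <|
    H.V_mono (by simp)

lemma V_two_pow_mul_le (x : M) {r : ℝ} (hr : 0 < r) (n : ℕ) :
    H.V x (2 ^ n * r) ≤ H.C_D ^ n * H.V x r := by
  have h := ENNReal.toReal_mono (ENNReal.mul_ne_top (ENNReal.pow_ne_top ENNReal.ofReal_ne_top)
    (H.measure_ball_ne_top x r)) (H.measure_ball_two_pow_mul_le x hr n)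
  rwa [ENNReal.toReal_mul, ENNReal.toReal_pow, ENNReal.toReal_ofReal H.C_D_pos.le] at h

lemma one_le_C_D (x : M) : 1 ≤ H.C_D := by
  have hV : H.V x 1 ≤ H.V x (2 ^ 1 * 1) := H.V_mono (by norm_num)
  have h := hV.trans (H.V_two_pow_mul_le x one_pos 1)
  rw [pow_one] at h
  exact (le_mul_iff_one_le_left (H.V_pos x one_pos)).1 h

lemma V_natCast_add_one_mul_le (x : M) {r : ℝ} (hr : 0 < r) (n : ℕ) :
    H.V x ((n + 1) * r) ≤ H.C_D ^ n * H.V x r := by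
  have hn : (n + 1 : ℝ) ≤ 2 ^ n := by exact_mod_cast Nat.lt_two_pow_self (n := n)
  refine (H.V_mono ?_).trans (H.V_two_pow_mul_le x hr n)
  rw [dist_self, add_zero]
  gcongr

lemma V_le_of_dist_lt {x y : M} {r : ℝ} (hr : 0 < r) {n : ℕ} (h : dist x y < (n + 1) * r) :
    H.V x r ≤ H.C_D ^ (n + 1) * H.V y r := by
  refine le_trans (H.V_mono ?_) (H.V_natCast_add_one_mul_le y hr (n + 1))
  push_cast
  linarith

instance : SigmaFinite H.μ := by
  rcases isEmpty_or_nonempty M with _ | ⟨⟨x⟩⟩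
  · rw [H.μ.eq_zero_of_isEmpty]
    infer_instance
  · refine ⟨⟨⟨fun n ↦ ball x n, fun _ ↦ trivial, fun n ↦ ?_, iUnion_ball_nat x⟩⟩⟩
    exact (H.measure_ball_ne_top x n).lt_top

/-! ### The Gaussian majorant -/

/-- The Gaussian `(V(x, r) V(y, r))^{-1/2} exp(-c d(x, y)²)` of the upper bounds (UE). -/
def gaussian (c r : ℝ) (x y : M) : ℝ :=
  Real.exp (-c * dist x y ^ 2) / Real.sqrt (H.V x r * H.V y r)

lemma gaussian_le {x y : M} {c r : ℝ} (hc : 0 < c) (hr : 0 < r) {n : ℕ}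
    (hn : n * r ≤ dist x y) (hn' : dist x y < (n + 1) * r) :
    H.gaussian c r x y ≤ H.C_D ^ (n + 1) * Real.exp (-(c * r ^ 2) * n ^ 2) / H.V x r := by
  have hx := H.V_pos x hr
  have hy := H.V_pos y hr
  have hD : 1 ≤ H.C_D ^ (n + 1) := one_le_pow₀ (H.one_le_C_D x)
  have hV : H.V x r ≤ H.C_D ^ (n + 1) * Real.sqrt (H.V x r * H.V y r) := by
    rw [← div_le_iff₀' (by positivity)]
    refine Real.le_sqrt_of_sq_le ?_
    rw [div_pow, div_le_iff₀ (by positivity)]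
    calc H.V x r ^ 2 ≤ H.V x r * (H.C_D ^ (n + 1) * H.V y r) := by
          rw [sq]
          gcongr
          exact H.V_le_of_dist_lt hr hn'
      _ = H.V x r * H.V y r * H.C_D ^ (n + 1) := by ring
      _ ≤ H.V x r * H.V y r * (H.C_D ^ (n + 1)) ^ 2 := by
          gcongr
          exact le_self_pow₀ hD two_ne_zero
  have hexp : Real.exp (-c * dist x y ^ 2) ≤ Real.exp (-(c * r ^ 2) * n ^ 2) := by
    refine Real.exp_le_exp.2 ?_
    calc -c * dist x y ^ 2 ≤ -c * (n * r) ^ 2 :=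
          mul_le_mul_of_nonpos_left (by gcongr) (by linarith)
      _ = -(c * r ^ 2) * n ^ 2 := by ring
  rw [gaussian, div_le_div_iff₀ (by positivity) hx]
  calc Real.exp (-c * dist x y ^ 2) * H.V x r
      ≤ Real.exp (-(c * r ^ 2) * n ^ 2) * (H.C_D ^ (n + 1) * Real.sqrt (H.V x r * H.V y r)) := by
        gcongr
    _ = H.C_D ^ (n + 1) * Real.exp (-(c * r ^ 2) * n ^ 2) * Real.sqrt (H.V x r * H.V y r) := by
        ring

-- No relation between the σ-algebra and the metric is assumed, so balls, and with them `gaussian`,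
-- need not be measurable: the majorant is built from measurable hulls of balls.
lemma exists_measurable_gaussian_le {c r : ℝ} (hc : 0 < c) (hr : 0 < r) :
    ∃ K : ℝ≥0, ∀ x, ∃ g : M → ℝ≥0∞, Measurable g ∧
      (∀ y, ENNReal.ofReal (H.gaussian c r x y) ≤ g y) ∧ ∫⁻ y, g y ∂H.μ ≤ K := by
  have hD := H.C_D_pos
  let e : ℕ → ℝ := fun n ↦ Real.exp (-(c * r ^ 2) * n ^ 2)
  have hsum : Summable fun n ↦ H.C_D * ((H.C_D ^ 2) ^ n * e n) :=
    (summable_pow_mul_exp_neg_mul_sq (by positivity) (by positivity)).mul_left _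
  refine ⟨(∑' n, H.C_D * ((H.C_D ^ 2) ^ n * e n)).toNNReal, fun x ↦ ?_⟩
  have hV := H.V_pos x hr
  let a : ℕ → ℝ := fun n ↦ H.C_D ^ (n + 1) * e n / H.V x r
  let B : ℕ → Set M := fun n ↦ toMeasurable H.μ (ball x ((n + 1) * r))
  have hB (n : ℕ) : MeasurableSet (B n) := measurableSet_toMeasurable _ _
  have hmeas (n : ℕ) : Measurable ((B n).indicator fun _ ↦ ENNReal.ofReal (a n)) :=
    measurable_const.indicator (hB n)
  refine ⟨fun y ↦ ∑' n, (B n).indicator (fun _ ↦ ENNReal.ofReal (a n)) y, .tsum hmeas,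
    fun y ↦ ?_, ?_⟩
  · have hn : (⌊dist x y / r⌋₊ : ℝ) * r ≤ dist x y :=
      (le_div_iff₀ hr).1 (Nat.floor_le (by positivity))
    have hn' : dist x y < (⌊dist x y / r⌋₊ + 1) * r :=
      (div_lt_iff₀ hr).1 (Nat.lt_floor_add_one _)
    refine le_trans ?_ (ENNReal.le_tsum ⌊dist x y / r⌋₊)
    rw [indicator_of_mem (subset_toMeasurable _ _ (mem_ball'.2 hn'))]
    exact ENNReal.ofReal_le_ofReal (H.gaussian_le hc hr hn hn')
  · rw [lintegral_tsum fun n ↦ (hmeas n).aemeasurable, ← ENNReal.ofReal,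
      ENNReal.ofReal_tsum_of_nonneg (fun n ↦ by positivity) hsum]
    refine ENNReal.tsum_le_tsum fun n ↦ ?_
    rw [lintegral_indicator_const (hB n), measure_toMeasurable,
      ← ofReal_measureReal (H.measure_ball_ne_top _ _), ← ENNReal.ofReal_mul (by positivity)]
    refine ENNReal.ofReal_le_ofReal ?_
    calc a n * H.V x ((n + 1) * r) ≤ a n * (H.C_D ^ n * H.V x r) := by
          gcongr
          exact H.V_natCast_add_one_mul_le x hr n
      _ = H.C_D * ((H.C_D ^ 2) ^ n * e n) := by
          simp only [a]
          field_simp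
          ring

/-! ### Time derivatives of the kernel -/

/-- The time derivative `∂_t^m p_t(x, y)` of the heat kernel. -/
def kernelDeriv (m : ℕ) (t : ℝ) (x y : M) : ℝ := iteratedDeriv m (fun s ↦ H.p s x y) t

lemma hasDerivAt_kernelDeriv (m : ℕ) {t : ℝ} (ht : 0 < t) (x y : M) :
    HasDerivAt (fun s ↦ H.kernelDeriv m s x y) (H.kernelDeriv (m + 1) t x y) t := by
  unfold kernelDeriv
  rw [iteratedDeriv_succ]
  exact (H.smooth x y m t ht).hasDerivAt

lemma measurable_uncurry_kernelDeriv (m : ℕ) {t : ℝ} (ht : 0 < t) :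
    Measurable (Function.uncurry (H.kernelDeriv m t)) := by
  induction m generalizing t with
  | zero => exact H.p_meas t ht
  | succ m ih =>
    exact measurable_of_hasDerivAt (fun s hs ↦ ih (ht.trans_le hs))
      fun z ↦ H.hasDerivAt_kernelDeriv m ht z.1 z.2

lemma measurable_kernelDeriv (m : ℕ) {t : ℝ} (ht : 0 < t) (x : M) :
    Measurable (H.kernelDeriv m t x) :=
  (H.measurable_uncurry_kernelDeriv m ht).comp measurable_prodMk_left

lemma exists_abs_kernelDeriv_le_gaussian (m : ℕ) {τ : ℝ} (hτ : 0 < τ) :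
    ∃ C, 0 ≤ C ∧ ∃ c, 0 < c ∧ ∀ t ∈ Icc τ 1, ∀ x y,
      |H.kernelDeriv m t x y| ≤ C * H.gaussian c (Real.sqrt τ) x y := by
  obtain ⟨C, hC, c, hc, hUE⟩ := H.UE m
  refine ⟨(τ ^ m)⁻¹ * C, by positivity, c, hc, fun t ⟨hτt, ht1⟩ x y ↦ ?_⟩
  have ht : 0 < t := hτ.trans_le hτt
  have hr : 0 < Real.sqrt τ := Real.sqrt_pos.2 hτ
  have hVx := H.V_pos x hr
  have hVy := H.V_pos y hr
  have hV (z : M) : H.V z (Real.sqrt τ) ≤ H.V z (Real.sqrt t) :=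
    H.V_mono (by rw [dist_self, add_zero]; exact Real.sqrt_le_sqrt hτt)
  have hexp : -c * dist x y ^ 2 / t ≤ -c * dist x y ^ 2 := by
    rw [div_le_iff₀ ht]
    nlinarith [mul_nonneg hc.le (sq_nonneg (dist x y))]
  rw [mul_assoc, ← div_eq_inv_mul, le_div_iff₀' (by positivity)]
  calc τ ^ m * |H.kernelDeriv m t x y| ≤ t ^ m * |H.kernelDeriv m t x y| := by gcongr
    _ = |t ^ m * H.kernelDeriv m t x y| := by rw [abs_mul, abs_of_pos (pow_pos ht m)]
    _ ≤ C / Real.sqrt (H.V x (Real.sqrt t) * H.V y (Real.sqrt t))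
          * Real.exp (-c * dist x y ^ 2 / t) := hUE t ht ht1 x y
    _ ≤ C / Real.sqrt (H.V x (Real.sqrt τ) * H.V y (Real.sqrt τ))
          * Real.exp (-c * dist x y ^ 2) := by
        gcongr
        exacts [measureReal_nonneg, hV x, hV y]
    _ = C * H.gaussian c (Real.sqrt τ) x y := by
        rw [gaussian]
        ring

lemma exists_measurable_kernelDeriv_le (m : ℕ) {τ : ℝ} (hτ : 0 < τ) :
    ∃ K : ℝ≥0, ∀ x, ∃ g : M → ℝ≥0∞, Measurable g ∧
      (∀ t ∈ Icc τ 1, ∀ y, ‖H.kernelDeriv m t x y‖ₑ ≤ g y) ∧ ∫⁻ y, g y ∂H.μ ≤ K := by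
  obtain ⟨C, hC, c, hc, hk⟩ := H.exists_abs_kernelDeriv_le_gaussian m hτ
  obtain ⟨K, hK⟩ := H.exists_measurable_gaussian_le hc (Real.sqrt_pos.2 hτ)
  refine ⟨C.toNNReal * K, fun x ↦ ?_⟩
  obtain ⟨g, hg, hle, hint⟩ := hK x
  refine ⟨fun y ↦ ENNReal.ofReal C * g y, hg.const_mul _, fun t ht y ↦ ?_, ?_⟩
  · rw [Real.enorm_eq_ofReal_abs]
    calc ENNReal.ofReal |H.kernelDeriv m t x y|
        ≤ ENNReal.ofReal (C * H.gaussian c (Real.sqrt τ) x y) :=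
          ENNReal.ofReal_le_ofReal (hk t ht x y)
      _ = ENNReal.ofReal C * ENNReal.ofReal (H.gaussian c (Real.sqrt τ) x y) :=
          ENNReal.ofReal_mul hC
      _ ≤ ENNReal.ofReal C * g y := by gcongr; exact hle y
  · rw [lintegral_const_mul _ hg, ENNReal.coe_mul]
    exact mul_le_mul_right hint _

lemma integrable_kernelDeriv (m : ℕ) {t : ℝ} (ht : 0 < t) (ht1 : t ≤ 1) (x : M) :
    Integrable (H.kernelDeriv m t x) H.μ := by
  obtain ⟨K, hK⟩ := H.exists_measurable_kernelDeriv_le m ht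
  obtain ⟨g, -, hle, hint⟩ := hK x
  exact ⟨(H.measurable_kernelDeriv m ht x).aestronglyMeasurable,
    (lintegral_mono (hle t ⟨le_rfl, ht1⟩)).trans_lt (hint.trans_lt ENNReal.coe_lt_top)⟩

/-! ### The semigroup on bounded measurable functions -/

lemma integrable_p {t : ℝ} (ht : 0 < t) (x : M) : Integrable (H.p t x) H.μ :=
  .of_integral_ne_zero (by rw [H.conservative t ht x]; exact one_ne_zero)

lemma lintegral_enorm_p {t : ℝ} (ht : 0 < t) (x : M) : ∫⁻ y, ‖H.p t x y‖ₑ ∂H.μ = 1 := by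
  rw [← ofReal_integral_norm_eq_lintegral_enorm (H.integrable_p ht x)]
  simp only [Real.norm_of_nonneg (H.p_nonneg t ht x _), H.conservative t ht x, ENNReal.ofReal_one]

section semigroup

variable {f : M → ℝ}

lemma measurable_S (hf : Measurable f) {t : ℝ} (ht : 0 < t) : Measurable (H.S t f) :=
  ((H.p_meas t ht).mul (hf.comp measurable_snd)).stronglyMeasurable.integral_prod_right.measurable

lemma supNorm_S_le (hf : BddMeasurable f) {t : ℝ} (ht : 0 < t) :
    supNorm (H.S t f) ≤ supNorm f :=
  supNorm_le_iff.2 fun x ↦ (hf.enorm_integral_mul_le _).trans_eq <| by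
    rw [H.lintegral_enorm_p ht x, one_mul]

lemma bddMeasurable_S (hf : BddMeasurable f) {t : ℝ} (ht : 0 < t) : BddMeasurable (H.S t f) :=
  ⟨H.measurable_S hf.measurable ht, (H.supNorm_S_le hf ht).trans_lt hf.supNorm_lt_top⟩

lemma integrable_p_mul_p {s t : ℝ} (hs : 0 < s) (ht : 0 < t) (x : M) :
    Integrable (fun q : M × M ↦ H.p s x q.1 * H.p t q.1 q.2) (H.μ.prod H.μ) := by
  have hmeas : Measurable fun q : M × M ↦ H.p s x q.1 * H.p t q.1 q.2 :=
    (((H.p_meas s hs).comp measurable_prodMk_left).comp measurable_fst).mul (H.p_meas t ht)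
  refine (integrable_prod_iff hmeas.aestronglyMeasurable).2 ⟨.of_forall fun y ↦ ?_, ?_⟩
  · exact (H.integrable_p ht y).const_mul (H.p s x y)
  · simp only [norm_mul, integral_const_mul, Real.norm_of_nonneg (H.p_nonneg s hs _ _),
      Real.norm_of_nonneg (H.p_nonneg t ht _ _), H.conservative t ht, mul_one]
    exact H.integrable_p hs x

lemma S_add (hf : BddMeasurable f) {s t : ℝ} (hs : 0 < s) (ht : 0 < t) :
    H.S (s + t) f = H.S s (H.S t f) := by
  ext x
  have hint : Integrable (Function.uncurry fun y z ↦ H.p s x y * H.p t y z * f z)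
      (H.μ.prod H.μ) :=
    (H.integrable_p_mul_p hs ht x).mul_bdd (hf.measurable.comp measurable_snd).aestronglyMeasurable
      (.of_forall fun q ↦ hf.norm_le q.2)
  calc ∫ z, H.p (s + t) x z * f z ∂H.μ
      = ∫ z, ∫ y, H.p s x y * H.p t y z * f z ∂H.μ ∂H.μ := by
        simp only [H.semigroup s t hs ht, integral_mul_const]
    _ = ∫ y, ∫ z, H.p s x y * H.p t y z * f z ∂H.μ ∂H.μ := (integral_integral_swap hint).symm
    _ = ∫ y, H.p s x y * H.S t f y ∂H.μ := by
        simp only [mul_assoc, integral_const_mul, S]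

lemma S_sum_const_mul {ι : Type*} (I : Finset ι) (c : ι → ℝ) {u : ι → M → ℝ}
    (hu : ∀ i ∈ I, BddMeasurable (u i)) {t : ℝ} (ht : 0 < t) (x : M) :
    H.S t (fun y ↦ ∑ i ∈ I, c i * u i y) x = ∑ i ∈ I, c i * H.S t (u i) x := by
  simp only [S, Finset.mul_sum, mul_left_comm _ (c _)]
  rw [integral_finsetSum]
  · simp only [integral_const_mul]
  · exact fun i hi ↦ ((hu i hi).integrable_mul (H.integrable_p ht x)).const_mul _

lemma hasDerivAt_S_of_bounded {u u' : ℝ → M → ℝ} {U : Set ℝ} {r s : ℝ} {A : ℝ≥0} (hU : U ∈ nhds r)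
    (hs : 0 < s) (hu : ∀ t ∈ U, BddMeasurable (u t)) (hu' : Measurable (u' r))
    (hA : ∀ t ∈ U, supNorm (u' t) ≤ A)
    (hderiv : ∀ t ∈ U, ∀ y, HasDerivAt (fun t ↦ u t y) (u' t y) t) (x : M) :
    HasDerivAt (fun t ↦ H.S s (u t) x) (H.S s (u' r) x) r := by
  have hp := H.integrable_p hs x
  have hint : ∀ t ∈ U, Integrable (fun y ↦ H.p s x y * u t y) H.μ :=
    fun t ht ↦ (hu t ht).integrable_mul hp
  refine (hasDerivAt_integral_of_dominated_loc_of_deriv_le (bound := fun y ↦ H.p s x y * A)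
    (F' := fun t y ↦ H.p s x y * u' t y) hU ?_ (hint r (mem_of_mem_nhds hU)) ?_ ?_
    (hp.mul_const _) ?_).2
  · filter_upwards [hU] with t ht using (hint t ht).aestronglyMeasurable
  · exact hp.aestronglyMeasurable.mul hu'.aestronglyMeasurable
  · refine .of_forall fun y t ht ↦ ?_
    rw [norm_mul, Real.norm_of_nonneg (H.p_nonneg s hs x y)]
    refine mul_le_mul_of_nonneg_left ?_ (H.p_nonneg s hs x y)
    exact enorm_le_coe.1 ((enorm_le_supNorm _ y).trans (hA t ht))
  · exact .of_forall fun y t ht ↦ (hderiv t ht y).const_mul _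

end semigroup

/-! ### Time derivatives of the semigroup -/

/-- The time derivative `∂_t^m e^{-tL} f`. -/
def timeDeriv (m : ℕ) (t : ℝ) (f : M → ℝ) (x : M) : ℝ := iteratedDeriv m (fun s ↦ H.S s f x) t

section timeDeriv

variable {f : M → ℝ}

lemma timeDeriv_zero (t : ℝ) (f : M → ℝ) : H.timeDeriv 0 t f = H.S t f := by
  ext x
  rw [timeDeriv, iteratedDeriv_zero]

lemma timeDeriv_succ (m : ℕ) (t : ℝ) (f : M → ℝ) (x : M) :
    H.timeDeriv (m + 1) t f x = deriv (fun s ↦ H.timeDeriv m s f x) t := by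
  unfold timeDeriv
  rw [iteratedDeriv_succ]

lemma timeDeriv_eq_integral (hf : BddMeasurable f) (m : ℕ) {t : ℝ} (ht : 0 < t) (x : M) :
    H.timeDeriv m t f x = ∫ y, H.kernelDeriv m t x y * f y ∂H.μ :=
  H.diff_under_int f hf.measurable hf.supNorm_lt_top m x t ht

lemma measurable_timeDeriv (hf : BddMeasurable f) (m : ℕ) {t : ℝ} (ht : 0 < t) :
    Measurable (H.timeDeriv m t f) := by
  rw [funext (H.timeDeriv_eq_integral hf m ht)]
  exact ((H.measurable_uncurry_kernelDeriv m ht).mul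
    (hf.measurable.comp measurable_snd)).stronglyMeasurable.integral_prod_right.measurable

lemma timeDeriv_S (hf : BddMeasurable f) (m : ℕ) {s t : ℝ} (hs : 0 < s) (ht : 0 < t) :
    H.timeDeriv m s (H.S t f) = H.timeDeriv m (s + t) f := by
  ext x
  have h : (fun r ↦ H.S (r + t) f x) =ᶠ[nhds s] fun r ↦ H.S r (H.S t f) x := by
    filter_upwards [lt_mem_nhds hs] with r hr
    rw [H.S_add hf hr ht]
  rw [timeDeriv, timeDeriv, ← h.iteratedDeriv_eq m,
    iteratedDeriv_comp_add_const m (fun r ↦ H.S r f x) t]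

lemma exists_supNorm_timeDeriv_le (m : ℕ) {τ : ℝ} (hτ : 0 < τ) :
    ∃ K : ℝ≥0, ∀ t, τ ≤ t → ∀ f : M → ℝ, BddMeasurable f →
      supNorm (H.timeDeriv m t f) ≤ K * supNorm f := by
  let σ : ℝ := min (τ / 2) 1
  have hσ : 0 < σ := by positivity
  obtain ⟨K, hK⟩ := H.exists_measurable_kernelDeriv_le m hσ
  have hbound (f : M → ℝ) (hf : BddMeasurable f) :
      supNorm (H.timeDeriv m σ f) ≤ K * supNorm f := by
    refine supNorm_le_iff.2 fun x ↦ ?_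
    obtain ⟨g, -, hle, hint⟩ := hK x
    rw [H.timeDeriv_eq_integral hf m hσ x]
    refine (hf.enorm_integral_mul_le _).trans ?_
    gcongr
    exact (lintegral_mono (hle σ ⟨le_rfl, min_le_right _ _⟩)).trans hint
  refine ⟨K, fun t ht f hf ↦ ?_⟩
  have hlt : 0 < t - σ := by linarith [min_le_left (τ / 2) 1]
  rw [← add_sub_cancel σ t, ← H.timeDeriv_S hf m hσ hlt]
  exact (hbound _ (H.bddMeasurable_S hf hlt)).trans (by gcongr; exact H.supNorm_S_le hf hlt)

lemma bddMeasurable_timeDeriv (hf : BddMeasurable f) (m : ℕ) {t : ℝ} (ht : 0 < t) :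
    BddMeasurable (H.timeDeriv m t f) := by
  obtain ⟨K, hK⟩ := H.exists_supNorm_timeDeriv_le m ht
  exact .of_supNorm_le (H.measurable_timeDeriv hf m ht) hf (hK t le_rfl f hf)

-- The kernel bounds (UE) stop at time `1`; the semigroup property then removes `t < 1`.
lemma hasDerivAt_timeDeriv_of_lt_one (hf : BddMeasurable f) (m : ℕ) {t : ℝ} (ht : 0 < t)
    (ht1 : t < 1) (x : M) :
    HasDerivAt (fun s ↦ H.timeDeriv m s f x) (H.timeDeriv (m + 1) t f x) t := by
  have hU : Ioo (t / 2) 1 ∈ nhds t := Ioo_mem_nhds (half_lt_self ht) ht1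
  have hpos {s : ℝ} (hs : s ∈ Ioo (t / 2) 1) : 0 < s := (half_pos ht).trans hs.1
  have hint (k : ℕ) {s : ℝ} (hs : s ∈ Ioo (t / 2) 1) :
      Integrable (fun y ↦ H.kernelDeriv k s x y * f y) H.μ :=
    hf.integrable_mul (H.integrable_kernelDeriv k (hpos hs) hs.2.le x)
  obtain ⟨K, hK⟩ := H.exists_measurable_kernelDeriv_le (m + 1) (half_pos ht)
  obtain ⟨g, hg, hle, hgK⟩ := hK x
  have hgtop : ∫⁻ y, g y ∂H.μ ≠ ⊤ := (hgK.trans_lt ENNReal.coe_lt_top).ne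
  have hderiv := (hasDerivAt_integral_of_dominated_loc_of_deriv_le
    (bound := fun y ↦ (g y).toReal * (supNorm f).toReal)
    (F := fun s y ↦ H.kernelDeriv m s x y * f y)
    (F' := fun s y ↦ H.kernelDeriv (m + 1) s x y * f y) hU
    (Filter.mem_of_superset hU fun s hs ↦ (hint m hs).aestronglyMeasurable)
    (hint m (mem_of_mem_nhds hU)) (hint (m + 1) (mem_of_mem_nhds hU)).aestronglyMeasurable ?_
    ((integrable_toReal_of_lintegral_ne_top hg.aemeasurable hgtop).mul_const _)
    (.of_forall fun y s hs ↦ (H.hasDerivAt_kernelDeriv m (hpos hs) x y).mul_const _)).2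
  · rw [← H.timeDeriv_eq_integral hf (m + 1) ht x] at hderiv
    refine hderiv.congr_of_eventuallyEq (Filter.mem_of_superset hU fun s hs ↦ ?_)
    exact H.timeDeriv_eq_integral hf m (hpos hs) x
  · filter_upwards [ae_lt_top hg hgtop] with y hy s hs
    rw [norm_mul, ← toReal_enorm (H.kernelDeriv _ _ _ _)]
    gcongr
    · exact hy.ne
    · exact hle s (Ioo_subset_Icc_self hs) y
    · exact hf.norm_le y

lemma hasDerivAt_timeDeriv (hf : BddMeasurable f) (m : ℕ) {t : ℝ} (ht : 0 < t) (x : M) :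
    HasDerivAt (fun s ↦ H.timeDeriv m s f x) (H.timeDeriv (m + 1) t f x) t := by
  obtain ⟨σ, hσ, hσt, hσ1⟩ : ∃ σ, 0 < σ ∧ σ < t ∧ σ < 1 := by
    obtain ⟨σ, hσ, hlt⟩ := exists_between (lt_min ht one_pos)
    exact ⟨σ, hσ, lt_min_iff.1 hlt⟩
  have hr : 0 < t - σ := sub_pos.2 hσt
  have hshift (k : ℕ) {s : ℝ} (hs : t - σ < s) :
      H.timeDeriv k s f x = H.timeDeriv k (s - (t - σ)) (H.S (t - σ) f) x := by
    rw [H.timeDeriv_S hf k (sub_pos.2 hs) hr, sub_add_cancel]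
  have hderiv := H.hasDerivAt_timeDeriv_of_lt_one (H.bddMeasurable_S hf hr) m
    (t := t - (t - σ)) (by linarith) (by linarith) x
  rw [hshift (m + 1) (sub_lt_self t hσ)]
  refine (hderiv.comp_sub_const t (t - σ)).congr_of_eventuallyEq ?_
  filter_upwards [lt_mem_nhds (sub_lt_self t hσ)] with s hs using hshift m hs

lemma S_timeDeriv (hf : BddMeasurable f) (m : ℕ) {s t : ℝ} (hs : 0 < s) (ht : 0 < t) :
    H.S s (H.timeDeriv m t f) = H.timeDeriv m (s + t) f := by
  induction m generalizing t with
  | zero => rw [timeDeriv_zero, timeDeriv_zero, H.S_add hf hs ht]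
  | succ m ih =>
    ext x
    obtain ⟨A, hA⟩ := H.exists_supNorm_timeDeriv_le (m + 1) (half_pos ht)
    have hU : Ioi (t / 2) ∈ nhds t := Ioi_mem_nhds (half_lt_self ht)
    have hpos {r : ℝ} (hr : r ∈ Ioi (t / 2)) : 0 < r := (half_pos ht).trans hr
    have hleft : HasDerivAt (fun r ↦ H.S s (H.timeDeriv m r f) x)
        (H.S s (H.timeDeriv (m + 1) t f) x) t :=
      H.hasDerivAt_S_of_bounded (u' := fun r ↦ H.timeDeriv (m + 1) r f)
        (A := A * (supNorm f).toNNReal) hU hs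
        (fun r hr ↦ H.bddMeasurable_timeDeriv hf m (hpos hr)) (H.measurable_timeDeriv hf _ ht)
        (fun r hr ↦ by
          rw [ENNReal.coe_mul, ENNReal.coe_toNNReal hf.supNorm_lt_top.ne]
          exact hA r (le_of_lt hr) f hf)
        (fun r hr ↦ H.hasDerivAt_timeDeriv hf m (hpos hr)) x
    have hright : HasDerivAt (fun r ↦ H.timeDeriv m (s + r) f x)
        (H.timeDeriv (m + 1) (s + t) f x) t :=
      (H.hasDerivAt_timeDeriv hf m (add_pos hs ht) x).comp_const_add s t
    refine hleft.unique (hright.congr_of_eventuallyEq ?_)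
    filter_upwards [lt_mem_nhds ht] with r hr
    rw [ih hr]

lemma timeDeriv_timeDeriv (hf : BddMeasurable f) (j m : ℕ) {s t : ℝ} (hs : 0 < s) (ht : 0 < t) :
    H.timeDeriv j s (H.timeDeriv m t f) = H.timeDeriv (j + m) (s + t) f := by
  induction j generalizing s with
  | zero => rw [timeDeriv_zero, H.S_timeDeriv hf m hs ht, zero_add]
  | succ j ih =>
    ext x
    refine (H.hasDerivAt_timeDeriv (H.bddMeasurable_timeDeriv hf m ht) j hs x).unique ?_
    rw [add_right_comm]
    refine ((H.hasDerivAt_timeDeriv hf (j + m) (add_pos hs ht) x).comp_add_const s t)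
      |>.congr_of_eventuallyEq ?_
    filter_upwards [lt_mem_nhds hs] with r hr
    rw [ih hr]

lemma timeDeriv_sum_const_mul {ι : Type*} (I : Finset ι) (c : ι → ℝ) {u : ι → M → ℝ}
    (hu : ∀ i ∈ I, BddMeasurable (u i)) (m : ℕ) {t : ℝ} (ht : 0 < t) (x : M) :
    H.timeDeriv m t (fun y ↦ ∑ i ∈ I, c i * u i y) x
      = ∑ i ∈ I, c i * H.timeDeriv m t (u i) x := by
  induction m generalizing t with
  | zero => simp only [timeDeriv_zero, H.S_sum_const_mul I c hu ht]
  | succ m ih =>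
    rw [timeDeriv_succ]
    refine (HasDerivAt.congr_of_eventuallyEq (HasDerivAt.fun_sum fun i hi ↦
      (H.hasDerivAt_timeDeriv (hu i hi) m ht x).const_mul (c i)) ?_).deriv
    filter_upwards [lt_mem_nhds ht] with s hs using ih hs

lemma supNorm_timeDeriv_le_of_le (hf : BddMeasurable f) (m : ℕ) {s t : ℝ} (hs : 0 < s)
    (hst : s ≤ t) : supNorm (H.timeDeriv m t f) ≤ supNorm (H.timeDeriv m s f) := by
  rcases hst.eq_or_lt with rfl | hlt
  · exact le_rfl
  · rw [← sub_add_cancel t s, ← H.S_timeDeriv hf m (sub_pos.2 hlt) hs]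
    exact H.supNorm_S_le (H.bddMeasurable_timeDeriv hf m hs) (sub_pos.2 hlt)

lemma supNorm_timeDeriv_le_add_succ (hf : BddMeasurable f) (m : ℕ) {t : ℝ} (ht : 0 < t) :
    supNorm (H.timeDeriv m t f)
      ≤ supNorm (H.timeDeriv m (t + 1) f) + supNorm (H.timeDeriv (m + 1) t f) := by
  refine supNorm_le_iff.2 fun x ↦ ?_
  obtain ⟨r, ⟨htr, -⟩, hr⟩ := exists_hasDerivAt_eq_slope (fun s ↦ H.timeDeriv m s f x)
    (fun s ↦ H.timeDeriv (m + 1) s f x) (lt_add_one t)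
    (fun s hs ↦ (H.hasDerivAt_timeDeriv hf m (ht.trans_le hs.1) x).continuousAt.continuousWithinAt)
    (fun s hs ↦ H.hasDerivAt_timeDeriv hf m (ht.trans hs.1) x)
  rw [add_sub_cancel_left, div_one] at hr
  rw [← sub_sub_cancel (H.timeDeriv m (t + 1) f x) (H.timeDeriv m t f x), ← hr]
  refine (enorm_sub_le).trans (add_le_add (enorm_le_supNorm _ x) ?_)
  exact (enorm_le_supNorm _ x).trans (H.supNorm_timeDeriv_le_of_le hf (m + 1) ht htr.le)

lemma exists_supNorm_timeDeriv_le_add (k m : ℕ) {s t : ℝ} (hs : 0 < s) (hst : s < t) :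
    ∃ K : ℝ≥0, ∀ f : M → ℝ, BddMeasurable f →
      supNorm (H.timeDeriv k t f) ≤ K * (supNorm (H.S t f) + supNorm (H.timeDeriv m s f)) := by
  have ht : 0 < t := hs.trans hst
  rcases le_total m k with hmk | hkm
  · obtain ⟨K, hK⟩ := H.exists_supNorm_timeDeriv_le (k - m) (sub_pos.2 hst)
    refine ⟨K, fun f hf ↦ ?_⟩
    have h := hK (t - s) le_rfl _ (H.bddMeasurable_timeDeriv hf m hs)
    rw [H.timeDeriv_timeDeriv hf _ _ (sub_pos.2 hst) hs, Nat.sub_add_cancel hmk,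
      sub_add_cancel] at h
    exact h.trans (by gcongr; exact le_add_self)
  · induction hkm using Nat.decreasingInduction with
    | self =>
      refine ⟨1, fun f hf ↦ (H.supNorm_timeDeriv_le_of_le hf m hs hst.le).trans ?_⟩
      rw [ENNReal.coe_one, one_mul]
      exact le_add_self
    | of_succ k _ ih =>
      obtain ⟨K, hK⟩ := ih
      obtain ⟨K', hK'⟩ := H.exists_supNorm_timeDeriv_le k one_pos
      refine ⟨K' + K, fun f hf ↦ ?_⟩
      have hone : supNorm (H.timeDeriv k (t + 1) f) ≤ K' * supNorm (H.S t f) := by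
        rw [add_comm, ← H.timeDeriv_S hf k one_pos ht]
        exact hK' 1 le_rfl _ (H.bddMeasurable_S hf ht)
      calc supNorm (H.timeDeriv k t f)
          ≤ supNorm (H.timeDeriv k (t + 1) f) + supNorm (H.timeDeriv (k + 1) t f) :=
            H.supNorm_timeDeriv_le_add_succ hf k ht
        _ ≤ K' * supNorm (H.S t f) + K * (supNorm (H.S t f) + supNorm (H.timeDeriv m s f)) :=
            add_le_add hone (hK f hf)
        _ ≤ K' * (supNorm (H.S t f) + supNorm (H.timeDeriv m s f))
              + K * (supNorm (H.S t f) + supNorm (H.timeDeriv m s f)) := by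
            gcongr
            exact le_self_add
        _ = (K' + K : ℝ≥0) * (supNorm (H.S t f) + supNorm (H.timeDeriv m s f)) := by
            rw [ENNReal.coe_add, add_mul]

end timeDeriv

/-! ### Hölder norms -/

section CNorm

variable {f : M → ℝ}

lemma supNorm_Q (a : ℕ) {t : ℝ} (ht : 0 ≤ t) (f : M → ℝ) :
    supNorm (H.Q a t f) = ENNReal.ofReal (t ^ a) * supNorm (H.timeDeriv a t f) := by
  calc supNorm (H.Q a t f) = ‖(-1 : ℝ) ^ a * t ^ a‖ₑ * supNorm (H.timeDeriv a t f) :=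
        supNorm_const_mul _ _
    _ = ENNReal.ofReal (t ^ a) * supNorm (H.timeDeriv a t f) := by
        rw [Real.enorm_eq_ofReal_abs, abs_mul, abs_neg_one_pow, one_mul,
          abs_of_nonneg (pow_nonneg ht a)]

lemma supNorm_S_one_le_CNorm (a : ℕ) (σ : ℝ) (f : M → ℝ) : supNorm (H.S 1 f) ≤ H.CNorm a σ f :=
  le_self_add

lemma exists_supNorm_timeDeriv_le_CNorm (a : ℕ) (σ : ℝ) {t : ℝ} (ht : 0 < t) (ht1 : t ≤ 1) :
    ∃ K : ℝ≥0, ∀ f : M → ℝ, supNorm (H.timeDeriv a t f) ≤ K * H.CNorm a σ f := by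
  have hc : 0 < t ^ (-σ / 2) * t ^ a := by positivity
  refine ⟨(t ^ (-σ / 2) * t ^ a)⁻¹.toNNReal, fun f ↦ ?_⟩
  have hQ : ENNReal.ofReal (t ^ (-σ / 2)) * supNorm (H.Q a t f) ≤ H.CNorm a σ f :=
    (le_iSup₂ (f := fun t (_ : t ∈ Ioc (0 : ℝ) 1) ↦
      ENNReal.ofReal (t ^ (-σ / 2)) * supNorm (H.Q a t f)) t ⟨ht, ht1⟩).trans le_add_self
  rw [H.supNorm_Q a ht.le, ← mul_assoc, ← ENNReal.ofReal_mul (by positivity)] at hQ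
  rwa [← ENNReal.ofReal, ENNReal.ofReal_inv_of_pos hc, mul_comm, ← div_eq_mul_inv,
    ENNReal.le_div_iff_mul_le (.inl (ENNReal.ofReal_pos.2 hc).ne') (.inl ENNReal.ofReal_ne_top),
    mul_comm]

lemma exists_supNorm_timeDeriv_one_le_CNorm (k a : ℕ) (σ : ℝ) :
    ∃ K : ℝ≥0, ∀ f : M → ℝ, BddMeasurable f →
      supNorm (H.timeDeriv k 1 f) ≤ K * H.CNorm a σ f := by
  obtain ⟨K, hK⟩ := H.exists_supNorm_timeDeriv_le_add k a one_half_pos one_half_lt_one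
  obtain ⟨K', hK'⟩ := H.exists_supNorm_timeDeriv_le_CNorm a σ one_half_pos one_half_lt_one.le
  refine ⟨K * (1 + K'), fun f hf ↦ (hK f hf).trans ?_⟩
  rw [ENNReal.coe_mul, mul_assoc, ENNReal.coe_add, ENNReal.coe_one, add_mul, one_mul]
  gcongr
  exacts [H.supNorm_S_one_le_CNorm a σ f, hK' f]

/-! ### The low-frequency projection -/

lemma bddMeasurable_P (hf : BddMeasurable f) (b : ℕ) {t : ℝ} (ht : 0 < t) :
    BddMeasurable (H.P b t f) :=
  .sum_const_mul _ _ fun k _ ↦ H.bddMeasurable_timeDeriv hf k ht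

lemma exists_supNorm_P_one_le_CNorm (b a : ℕ) (σ : ℝ) :
    ∃ K : ℝ≥0, ∀ f : M → ℝ, BddMeasurable f → supNorm (H.P b 1 f) ≤ K * H.CNorm a σ f := by
  choose K hK using fun k ↦ H.exists_supNorm_timeDeriv_one_le_CNorm k a σ
  exact ⟨_, fun f hf ↦ supNorm_sum_const_mul_le _ _ fun k _ ↦ hK k f hf⟩

lemma exists_supNorm_timeDeriv_P_le (b m : ℕ) {t : ℝ} (ht : 0 < t) :
    ∃ K : ℝ≥0, ∀ s, 0 < s → ∀ f : M → ℝ, BddMeasurable f →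
      supNorm (H.timeDeriv m s (H.P b t f)) ≤ K * supNorm f := by
  choose K hK using fun k ↦ H.exists_supNorm_timeDeriv_le (m + k) ht
  let c : ℕ → ℝ := fun k ↦ (Nat.factorial k : ℝ)⁻¹ * (-1) ^ k * t ^ k
  refine ⟨∑ k ∈ Finset.range b, ‖c k‖₊ * K k, fun s hs f hf ↦ ?_⟩
  have hsum : H.timeDeriv m s (H.P b t f)
      = fun x ↦ ∑ k ∈ Finset.range b, c k * H.timeDeriv (m + k) (s + t) f x := by
    ext x
    refine (H.timeDeriv_sum_const_mul _ c (fun k _ ↦ H.bddMeasurable_timeDeriv hf k ht)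
      m hs x).trans ?_
    simp only [H.timeDeriv_timeDeriv hf m _ hs ht]
  rw [hsum]
  exact supNorm_sum_const_mul_le _ _ fun k _ ↦ hK k (s + t) (by linarith) f hf

lemma exists_CNorm_P_le (b a : ℕ) {σ t : ℝ} (hσ : σ ≤ 2 * a) (ht : 0 < t) :
    ∃ K : ℝ≥0, ∀ f : M → ℝ, BddMeasurable f → H.CNorm a σ (H.P b t f) ≤ K * supNorm f := by
  obtain ⟨K₀, hK₀⟩ := H.exists_supNorm_timeDeriv_P_le b 0 ht
  obtain ⟨K, hK⟩ := H.exists_supNorm_timeDeriv_P_le b a ht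
  refine ⟨K₀ + K, fun f hf ↦ ?_⟩
  rw [ENNReal.coe_add, add_mul]
  refine add_le_add ?_ (iSup₂_le fun s ⟨hs, hs1⟩ ↦ ?_)
  · rw [← timeDeriv_zero]
    exact hK₀ 1 one_pos f hf
  · have hpow : s ^ (-σ / 2) * s ^ a ≤ 1 := by
      rw [← Real.rpow_natCast, ← Real.rpow_add hs]
      exact Real.rpow_le_one hs.le hs1 (by linarith)
    rw [H.supNorm_Q a hs.le, ← mul_assoc, ← ENNReal.ofReal_mul (by positivity)]
    calc ENNReal.ofReal (s ^ (-σ / 2) * s ^ a) * supNorm (H.timeDeriv a s (H.P b t f))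
        ≤ 1 * (K * supNorm f) := mul_le_mul' (ENNReal.ofReal_le_one.2 hpow) (hK s hs f hf)
      _ = K * supNorm f := one_mul _

end CNorm

end HeatKernelSetup

theorem low_frequency_part_estimate_general
    {M : Type*} [MeasurableSpace M] [MetricSpace M] (H : HeatKernelSetup M)
    (b : ℕ) (α β : ℝ) {γ : ℝ} {a : ℕ} (haγ : γ ≤ 2 * a) (a' : ℕ) :
    ∃ C, 0 < C ∧ ∀ f g : M → ℝ,
      Measurable f → supNorm f < ⊤ → Measurable g → supNorm g < ⊤ →
      H.CNorm a γ (H.P b 1 (fun y => H.P b 1 f y * H.P b 1 g y))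
        ≤ ENNReal.ofReal C * H.CNorm a' α f * H.CNorm a' β g := by
  obtain ⟨K, hK⟩ := H.exists_CNorm_P_le b a haγ one_pos
  obtain ⟨Kα, hKα⟩ := H.exists_supNorm_P_one_le_CNorm b a' α
  obtain ⟨Kβ, hKβ⟩ := H.exists_supNorm_P_one_le_CNorm b a' β
  refine ⟨K * Kα * Kβ + 1, by positivity, fun f g hf hf' hg hg' ↦ ?_⟩
  have hPf := H.bddMeasurable_P ⟨hf, hf'⟩ b one_pos
  have hPg := H.bddMeasurable_P ⟨hg, hg'⟩ b one_pos
  calc H.CNorm a γ (H.P b 1 fun y ↦ H.P b 1 f y * H.P b 1 g y)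
      ≤ K * supNorm (fun y ↦ H.P b 1 f y * H.P b 1 g y) := hK _ (hPf.mul hPg)
    _ ≤ K * (supNorm (H.P b 1 f) * supNorm (H.P b 1 g)) := by
        gcongr
        exact supNorm_mul_le _ _
    _ ≤ K * (Kα * H.CNorm a' α f * (Kβ * H.CNorm a' β g)) := by
        gcongr
        exacts [hKα f ⟨hf, hf'⟩, hKβ g ⟨hg, hg'⟩]
    _ = (K * Kα * Kβ : ℝ≥0) * H.CNorm a' α f * H.CNorm a' β g := by
        push_cast
        ring
    _ ≤ ENNReal.ofReal (K * Kα * Kβ + 1) * H.CNorm a' α f * H.CNorm a' β g := by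
        gcongr
        rw [← ENNReal.ofReal_coe_nnreal]
        exact ENNReal.ofReal_le_ofReal (by push_cast; linarith)

/-- **Proposition 3.1.** The low-frequency part
`Δ_{-1}(f,g) = P_1^{(b)}( P_1^{(b)} f · P_1^{(b)} g )` satisfies, for any real `α, β`, any
`γ > 0`, any integer `a ≥ γ` and any integer `a' ≥ 1`, the bound
`‖Δ_{-1}(f,g)‖_{C^γ,(a)} ≤ C ‖f‖_{C^α,(a')} ‖g‖_{C^β,(a')}`. -/
theorem low_frequency_part_estimate
    {M : Type*} [MeasurableSpace M] [MetricSpace M] (H : HeatKernelSetup M)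
    (b : ℕ) (hb : 2 ≤ b) (α β γ : ℝ) (hγ : 0 < γ)
    (a : ℕ) (haγ : γ ≤ (a : ℝ)) (a' : ℕ) (ha' : 1 ≤ a') :
    ∃ C, 0 < C ∧ ∀ f g : M → ℝ,
      Measurable f → supNorm f < ⊤ → Measurable g → supNorm g < ⊤ →
      H.CNorm a γ (H.P b 1 (fun y => H.P b 1 f y * H.P b 1 g y))
        ≤ ENNReal.ofReal C * H.CNorm a' α f * H.CNorm a' β g := by
  exact low_frequency_part_estimate_general H b α β (haγ.trans (by linarith)) a'
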